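/- arXiv:1303.1661 — 4 statements merged into one kernel-verified Lean document; each statement's English description precedes it below -/
import Mathlib

section
/- The quotient map φ : 𝔸 → 𝔸/ℚ, restricted to the set ℱ := [0,1) × ∏_p ℤ_p, is a bijection from ℱ onto 𝔸/ℚ. -/
open IsDedekindDomain

/-- The adele ring of `ℚ`: the product of the Archimedean completion `ℝ`
with the finite adele ring of `ℚ`. -/
noncomputable abbrev AQ : Type := ℝ × FiniteAdeleRing ℤ ℚ

/-- The additive subgroup of principal adeles, i.e. the diagonally embedded copy of `ℚ`. -/
noncomputable def principalQ : AddSubgroup AQ := ((algebraMap ℚ AQ).range).toAddSubgroup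

/-- The compact quotient group `𝔸/ℚ`. -/
noncomputable abbrev AModQ := AQ ⧸ principalQ

/-- The quotient map `φ : 𝔸 → 𝔸/ℚ`. -/
noncomputable def phiQ : AQ → AModQ := QuotientAddGroup.mk

/-- Multiplication by a rational `σ` descends to a continuous endomorphism of `𝔸/ℚ`. -/
noncomputable def mulAct (σ : ℚ) : AModQ →+ AModQ :=
  QuotientAddGroup.map principalQ principalQ (AddMonoidHom.mulLeft (algebraMap ℚ AQ σ))
    (fun x hx => by
      obtain ⟨q, hq⟩ := hx
      exact ⟨σ * q, by simp [map_mul, hq]⟩)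

/-- The fundamental domain `ℱ = [0,1) × ∏_p ℤ_p` inside the adeles. -/
def FD : Set AQ :=
  {x | x.1 ∈ Set.Ico (0 : ℝ) 1 ∧
    ∀ v : HeightOneSpectrum ℤ, x.2 v ∈ v.adicCompletionIntegers ℚ}

lemma rat_split (v : HeightOneSpectrum ℤ) (k : ℚ) :
    ∃ q : ℚ, v.valuation ℚ (k - q) ≤ 1 ∧
      ∀ w : HeightOneSpectrum ℤ, w ≠ v → w.valuation ℚ q ≤ 1 := by
  obtain ⟨p, hp⟩ := (IsPrincipalIdealRing.principal v.asIdeal).principal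
  replace hp : v.asIdeal = Ideal.span {p} := hp
  have hp0 : p ≠ 0 := by
    rintro rfl
    exact v.ne_bot (by simpa using hp)
  have hpp : Prime p := by
    rw [← Ideal.span_singleton_prime hp0, ← hp]; exact v.isPrime
  have hd : (k.den : ℤ) ≠ 0 := by exact_mod_cast k.den_nz
  obtain ⟨m, hm, hdm⟩ :=
    (FiniteMultiplicity.of_prime_left hpp hd).exists_eq_pow_mul_and_not_dvd
  obtain ⟨a, ha⟩ : ∃ a : ℕ, (k.den : ℤ) = p ^ a * m := ⟨_, hm⟩
  have hcop : IsCoprime (p ^ a) m := ((hpp.coprime_iff_not_dvd).2 hdm).pow_left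
  obtain ⟨s, t, hst⟩ := hcop
  have hm0 : m ≠ 0 := by rintro rfl; exact hdm (dvd_zero _)
  have hmQ : (m : ℚ) ≠ 0 := by exact_mod_cast hm0
  have hpQ : (p : ℚ) ≠ 0 := by exact_mod_cast hp0
  have hk : k = k.num / ((p : ℚ) ^ a * m) := by
    have : ((k.den : ℤ) : ℚ) = (p : ℚ) ^ a * m := by rw [ha]; push_cast; rfl
    rw [← this]
    exact_mod_cast (Rat.num_div_den k).symm
  have hstQ : (s : ℚ) * p ^ a + t * m = 1 := by exact_mod_cast hst
  refine ⟨((k.num * t : ℤ) : ℚ) / ((p : ℤ) : ℚ) ^ a, ?_, ?_⟩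
  · have : k - ((k.num * t : ℤ) : ℚ) / ((p : ℤ) : ℚ) ^ a =
        ((k.num * s : ℤ) : ℚ) / (m : ℚ) := by
      push_cast
      generalize (k.num : ℚ) = N at hk
      rw [hk, sub_eq_iff_eq_add, div_add_div _ _ hmQ (pow_ne_zero _ hpQ), mul_comm (m : ℚ)]
      congr 1
      · linear_combination (-N) * hstQ
      · ring
    rw [this, map_div₀]
    have h1 : v.valuation ℚ (m : ℚ) = 1 := by
      refine v.valuation_eq_one_iff_notMem.2 ?_
      rw [hp, Ideal.mem_span_singleton]; exact hdm
    rw [h1, div_one]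
    exact v.valuation_le_one _
  · intro w hw
    have h1 : w.valuation ℚ (p : ℚ) = 1 := by
      refine w.valuation_eq_one_iff_notMem.2 fun hmem => hw ?_
      have hle : v.asIdeal ≤ w.asIdeal := by
        rw [hp, Ideal.span_singleton_le_iff_mem]; exact hmem
      exact (HeightOneSpectrum.ext ((v.isMaximal.eq_of_le w.isPrime.ne_top hle))).symm
    rw [map_div₀, map_pow, h1, one_pow, div_one]
    exact w.valuation_le_one _

lemma coe_mem_iff (v : HeightOneSpectrum ℤ) (q : ℚ) :
    algebraMap ℚ (v.adicCompletion ℚ) q ∈ v.adicCompletionIntegers ℚ ↔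
      v.valuation ℚ q ≤ 1 := by
  rw [HeightOneSpectrum.mem_adicCompletionIntegers]
  rw [HeightOneSpectrum.algebraMap_adicCompletion]
  simp only [Function.comp_apply, Algebra.algebraMap_self, RingHom.id_apply]
  rw [HeightOneSpectrum.valuedAdicCompletion_eq_valuation' v q]

lemma local_split (v : HeightOneSpectrum ℤ) (x : v.adicCompletion ℚ) :
    ∃ q : ℚ, x - algebraMap ℚ (v.adicCompletion ℚ) q ∈ v.adicCompletionIntegers ℚ ∧
      ∀ w : HeightOneSpectrum ℤ, w ≠ v → w.valuation ℚ q ≤ 1 := by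
  have hopen : IsOpen {y : v.adicCompletion ℚ | x - y ∈ v.adicCompletionIntegers ℚ} :=
    (Valued.isOpen_valuationSubring (v.adicCompletion ℚ)).preimage
      (f := fun y => x - y) (by fun_prop)
  obtain ⟨k, hk⟩ := (HeightOneSpectrum.denseRange_algebraMap ℚ v).exists_mem_open hopen
    ⟨x, by simp [zero_mem]⟩
  obtain ⟨q, h1, h2⟩ := rat_split v k
  refine ⟨q, ?_, h2⟩
  have := add_mem hk ((coe_mem_iff v _).2 h1)
  rw [map_sub] at this
  simpa using this

lemma global_split (x : FiniteAdeleRing ℤ ℚ) :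
    ∃ q : ℚ, ∀ v : HeightOneSpectrum ℤ,
      x v - algebraMap ℚ (v.adicCompletion ℚ) q ∈ v.adicCompletionIntegers ℚ := by
  classical
  have hfin : {v : HeightOneSpectrum ℤ | x v ∉ v.adicCompletionIntegers ℚ}.Finite := x.2
  choose f hf1 hf2 using fun v => local_split v (x v)
  refine ⟨∑ v ∈ hfin.toFinset, f v, fun v => ?_⟩
  rw [map_sum]
  by_cases hv : v ∈ hfin.toFinset
  · rw [← Finset.add_sum_erase _ _ hv, ← sub_sub]
    refine sub_mem (hf1 v) (sum_mem fun w hw => (coe_mem_iff v _).2 (hf2 w v ?_))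
    exact (Finset.ne_of_mem_erase hw).symm
  · refine sub_mem (by simpa using hv) (sum_mem fun w hw => (coe_mem_iff v _).2 (hf2 w v ?_))
    rintro rfl; exact hv hw

lemma snd_apply (q : ℚ) (v : HeightOneSpectrum ℤ) :
    (algebraMap ℚ AQ q).2 v = algebraMap ℚ (v.adicCompletion ℚ) q := rfl

lemma fst_apply (q : ℚ) : (algebraMap ℚ AQ q).1 = (q : ℝ) := rfl

lemma fsub_apply (x y : FiniteAdeleRing ℤ ℚ) (v : HeightOneSpectrum ℤ) :
    (x - y) v = x v - y v := rfl

/-- The quotient map `φ : 𝔸 → 𝔸/ℚ`, restricted to `ℱ = [0,1) × ∏_p ℤ_p`, is a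
bijection from `ℱ` onto `𝔸/ℚ`. -/
theorem fundamental_domain_bijective : Set.BijOn phiQ FD Set.univ := by
  refine ⟨fun _ _ => Set.mem_univ _, ?_, ?_⟩
  · rintro x ⟨⟨hx0, hx1⟩, hx⟩ y ⟨⟨hy0, hy1⟩, hy⟩ h
    obtain ⟨q, hq⟩ := (QuotientAddGroup.eq (s := principalQ)).1 h
    replace hq : algebraMap ℚ AQ q = -x + y := hq
    have hq' : y - x = algebraMap ℚ AQ q := by rw [hq]; abel
    have hint : ∀ v : HeightOneSpectrum ℤ, v.valuation ℚ q ≤ 1 := fun v => by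
      rw [← coe_mem_iff, ← snd_apply, ← hq']
      exact sub_mem (hy v) (hx v)
    obtain ⟨n, hn⟩ := HeightOneSpectrum.mem_integers_of_valuation_le_one ℚ q hint
    have hr : y.1 - x.1 = (n : ℝ) := by
      have := congrArg Prod.fst hq'
      rw [fst_apply, ← hn] at this
      simpa using this
    have hn0 : n = 0 := by
      have h1 : (n : ℝ) < 1 := by linarith
      have h2 : (-1 : ℝ) < n := by linarith
      have h1' : n < 1 := by exact_mod_cast h1
      have h2' : -1 < n := by exact_mod_cast h2
      omega
    have hq0 : q = 0 := by rw [← hn, hn0]; simp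
    rw [hq0, map_zero] at hq'
    exact (sub_eq_zero.1 hq').symm
  · intro z _
    obtain ⟨x, rfl⟩ := QuotientAddGroup.mk_surjective z
    obtain ⟨q, hq⟩ := global_split x.2
    let n : ℤ := ⌊x.1 - (q : ℝ)⌋
    refine ⟨x - algebraMap ℚ AQ (q + (n : ℚ)), ⟨?_, fun v => ?_⟩, ?_⟩
    · rw [Prod.fst_sub, fst_apply]
      push_cast
      have h1 := Int.floor_le (x.1 - (q : ℝ))
      have h2 := Int.lt_floor_add_one (x.1 - (q : ℝ))
      constructor <;> simp only [n] <;> linarith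
    · rw [Prod.snd_sub, fsub_apply, snd_apply, map_add, ← sub_sub]
      exact sub_mem (hq v) ((coe_mem_iff v _).2 (v.valuation_le_one n))
    · refine (QuotientAddGroup.eq (s := principalQ)).2 ⟨q + n, ?_⟩
      change algebraMap ℚ AQ (q + n) = _
      abel
end

section
/- Let ε > 0 and let X ⊆ [0,1) be an ε-dense subset of [0,1) (every point of [0,1) is within distance ε of a point of X). For each prime p set k_p(ε) := max(0, ⌈−log_p ε⌉ − 1) and set N(ε) := ∏_p p^{k_p(ε)} (a finite product, since k_p(ε) = 0 for all sufficiently large p). Then the set { (x; n, n, n, …) : x ∈ X, n ∈ ℤ, 1 ≤ n ≤ N(ε) } ⊆ ℱ — where (x; n, n, n, …) denotes the element of ℱ with real coordinate x and p-adic coordinate equal to the integer n for every prime p — is ε-dense in ℱ with respect to the metric d. -/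
instance (p : Nat.Primes) : Fact (Nat.Prime (p : ℕ)) := ⟨p.2⟩

/-- The space `ℝ × ∏_p ℤ_p` containing the fundamental domain `ℱ = [0,1) × ∏_p ℤ_p`. -/
abbrev FSpace : Type := ℝ × ∀ p : Nat.Primes, ℤ_[(p : ℕ)]

/-- `max(|α_∞ − β_∞ − η|_∞, sup_p |α_p − β_p − η|_p / p)` for a fixed integer `η`. -/
noncomputable def dAux (α β : FSpace) (η : ℤ) : ℝ :=
  max |α.1 - β.1 - (η : ℝ)|
    (⨆ p : Nat.Primes, ‖α.2 p - β.2 p - (η : ℤ_[(p : ℕ)])‖ / (p : ℝ))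

/-- The metric `d(α,β) = min_{η ∈ {0,1,−1}} max(|α_∞ − β_∞ − η|_∞, sup_p |α_p − β_p − η|_p / p)`. -/
noncomputable def dF (α β : FSpace) : ℝ := min (dAux α β 0) (min (dAux α β 1) (dAux α β (-1)))

/-- `k_p(ε) = max(0, ⌈−log_p ε⌉ − 1)`. -/
noncomputable def kp (ε : ℝ) (p : Nat.Primes) : ℕ :=
  (max 0 (⌈-(Real.log ε / Real.log (p : ℝ))⌉ - 1)).toNat

/-- `N(ε) = ∏_p p^{k_p(ε)}`, a finite product since `k_p(ε) = 0` for all large `p`. -/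
noncomputable def Neps (ε : ℝ) : ℕ := ∏ᶠ p : Nat.Primes, (p : ℕ) ^ kp ε p

lemma kp_spec (ε : ℝ) (hε : 0 < ε) (p : Nat.Primes) :
    ((p : ℝ)) ^ (-(kp ε p : ℤ)) / (p : ℝ) ≤ ε := by
  have hp1 : (1 : ℝ) < p := by exact_mod_cast p.2.one_lt
  have hp0 : (0 : ℝ) < p := by linarith
  have hl : 0 < Real.log (p : ℝ) := Real.log_pos hp1
  have h1 : -(Real.log ε / Real.log (p : ℝ)) ≤ (kp ε p : ℝ) + 1 := by
    have h2 : ⌈-(Real.log ε / Real.log (p : ℝ))⌉ ≤ (kp ε p : ℤ) + 1 := by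
      unfold kp
      omega
    exact_mod_cast Int.ceil_le.mp h2
  have h3 : -Real.log ε ≤ ((kp ε p : ℝ) + 1) * Real.log p := by
    rw [← neg_div, div_le_iff₀ hl] at h1
    exact h1
  rw [← Real.log_le_log_iff (by positivity) hε, Real.log_div (by positivity) (by positivity),
    Real.log_zpow]
  push_cast
  linarith

lemma kp_zero (ε : ℝ) (hε : 0 < ε) (p : Nat.Primes) (h : 1 / ε ≤ p) : kp ε p = 0 := by
  have hp1 : (1 : ℝ) < p := by exact_mod_cast p.2.one_lt
  have hp0 : (0 : ℝ) < p := by linarith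
  have hl : 0 < Real.log (p : ℝ) := Real.log_pos hp1
  have h1 : ⌈-(Real.log ε / Real.log (p : ℝ))⌉ ≤ 1 := by
    rw [Int.ceil_le, ← neg_div, div_le_iff₀ hl]
    have := Real.log_le_log (by positivity) h
    rw [one_div, Real.log_inv] at this
    simpa using this
  unfold kp
  omega

lemma kp_fin (ε : ℝ) (hε : 0 < ε) : {p : Nat.Primes | kp ε p ≠ 0}.Finite := by
  have : Set.Finite ((fun p : Nat.Primes => (p : ℕ)) ⁻¹' (Set.Iio ⌈1 / ε⌉₊)) :=
    (Set.finite_Iio _).preimage (Subtype.val_injective.injOn)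
  refine this.subset ?_
  intro p hp
  by_contra hc
  apply hp
  apply kp_zero ε hε
  simp only [Set.mem_preimage, Set.mem_Iio, not_lt] at hc
  exact Nat.ceil_le.mp hc

lemma exists_n (ε : ℝ) (hε : 0 < ε) (a : ∀ p : Nat.Primes, ℤ_[(p : ℕ)]) :
    ∃ n : ℤ, 1 ≤ n ∧ n ≤ (Neps ε : ℤ) ∧
      ∀ p, ‖a p - (n : ℤ_[(p : ℕ)])‖ ≤ (p : ℝ) ^ (-(kp ε p : ℤ)) := by
  classical
  set S := (kp_fin ε hε).toFinset with hS
  have hN : Neps ε = ∏ p ∈ S, (p : ℕ) ^ kp ε p := by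
    unfold Neps
    apply finprod_eq_prod_of_mulSupport_subset
    intro p hp
    simp only [hS, Set.Finite.coe_toFinset, Set.mem_setOf_eq]
    intro h
    simp [h] at hp
  have hNpos : 0 < Neps ε := by
    rw [hN]
    exact Finset.prod_pos fun p _ => pow_pos p.2.pos _
  have hco : Set.Pairwise (S : Set Nat.Primes)
      (Function.onFun Nat.Coprime (fun p : Nat.Primes => (p : ℕ) ^ kp ε p)) := by
    intro p _ q _ hpq
    apply Nat.Coprime.pow
    rw [Nat.coprime_primes p.2 q.2]
    exact fun h => hpq (Subtype.ext h)
  obtain ⟨m, hm⟩ := Nat.chineseRemainderOfFinset (fun p : Nat.Primes => (a p).appr (kp ε p))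
    (fun p : Nat.Primes => (p : ℕ) ^ kp ε p) S (fun p _ => (pow_pos p.2.pos _).ne') hco
  refine ⟨(((m : ℤ) - 1) % (Neps ε : ℤ)) + 1, ?_, ?_, ?_⟩
  · have := Int.emod_nonneg ((m : ℤ) - 1) (b := (Neps ε : ℤ)) (by omega)
    omega
  · have := Int.emod_lt_of_pos ((m : ℤ) - 1) (b := (Neps ε : ℤ)) (by omega)
    omega
  intro p
  set n : ℤ := (((m : ℤ) - 1) % (Neps ε : ℤ)) + 1 with hn
  have hdm : (((p : ℕ) ^ kp ε p : ℕ) : ℤ) ∣ ((a p).appr (kp ε p) : ℤ) - n := by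
    by_cases hk : kp ε p = 0
    · simp [hk]
    have hpS : p ∈ S := by simpa [hS] using hk
    have h1 : (((p : ℕ) ^ kp ε p : ℕ) : ℤ) ∣ (Neps ε : ℤ) := by
      rw [Int.natCast_dvd_natCast, hN]
      exact Finset.dvd_prod_of_mem (fun p : Nat.Primes => (p : ℕ) ^ kp ε p) hpS
    have h2 : (((p : ℕ) ^ kp ε p : ℕ) : ℤ) ∣ ((a p).appr (kp ε p) : ℤ) - m :=
      (Nat.modEq_iff_dvd).mp (hm p hpS)
    have h3 : (m : ℤ) - n = Neps ε * (((m : ℤ) - 1) / (Neps ε : ℤ)) := by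
      have := Int.emod_add_mul_ediv ((m : ℤ) - 1) (Neps ε : ℤ)
      rw [hn]; linarith
    have h4 := h2.add (h3 ▸ h1.mul_right _ : (((p : ℕ) ^ kp ε p : ℕ) : ℤ) ∣ (m : ℤ) - n)
    simpa using h4
  rw [PadicInt.norm_le_pow_iff_mem_span_pow]
  have h5 := PadicInt.appr_spec (kp ε p) (a p)
  have h6 : (((a p).appr (kp ε p) : ℤ_[(p : ℕ)]) - (n : ℤ_[(p : ℕ)])) ∈
      (Ideal.span {((p : ℕ) : ℤ_[(p : ℕ)]) ^ kp ε p} : Ideal ℤ_[(p : ℕ)]) := by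
    rw [Ideal.mem_span_singleton]
    have := map_dvd (Int.castRingHom ℤ_[(p : ℕ)]) hdm
    simpa using this
  have h7 := Ideal.add_mem _ h5 h6
  simpa using h7

/-- If `X ⊆ [0,1)` is `ε`-dense in `[0,1)`, then the set
`{(x; n, n, n, …) : x ∈ X, 1 ≤ n ≤ N(ε)}` is `ε`-dense in `ℱ = [0,1) × ∏_p ℤ_p`
with respect to the metric `d`. -/
theorem integer_points_eps_dense (ε : ℝ) (hε : 0 < ε)
    (X : Set ℝ) (hX : X ⊆ Set.Ico (0 : ℝ) 1)
    (hXdense : ∀ y ∈ Set.Ico (0 : ℝ) 1, ∃ x ∈ X, |y - x| ≤ ε) :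
    ∀ α : FSpace, α.1 ∈ Set.Ico (0 : ℝ) 1 →
      ∃ x ∈ X, ∃ n : ℤ, 1 ≤ n ∧ n ≤ (Neps ε : ℤ) ∧
        dF α (x, fun p => (n : ℤ_[(p : ℕ)])) ≤ ε := by
  intro α hα
  obtain ⟨x, hx, hd⟩ := hXdense α.1 hα
  obtain ⟨n, h1, h2, h3⟩ := exists_n ε hε α.2
  refine ⟨x, hx, n, h1, h2, ?_⟩
  refine (min_le_left _ _).trans ?_
  unfold dAux
  refine max_le (by simpa using hd) ?_
  refine Real.iSup_le (fun p => ?_) hε.le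
  refine le_trans ?_ (kp_spec ε hε p)
  have := h3 p
  simp only [Int.cast_zero, sub_zero]
  gcongr
end

section
/- Suppose γ, δ ∈ ℚ with γ > 0 and δ > 1 are multiplicatively independent. Then for every ε > 0 there exist a ∈ ℕ with a ≥ 1 and b ∈ ℤ such that 1 < γ^a / δ^b < 1 + ε. -/
/-- Nonzero rationals `γ` and `δ` are multiplicatively independent:
`|γ|^a = |δ|^b` with integers `a, b` forces `a = b = 0`. -/
def MultIndep (γ δ : ℚ) : Prop := ∀ a b : ℤ, |γ| ^ a = |δ| ^ b → a = 0 ∧ b = 0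

theorem exists_ratio_close_to_one (γ δ : ℚ) (hγ : 0 < γ) (hδ : 1 < δ)
    (hind : MultIndep γ δ) (ε : ℝ) (hε : 0 < ε) :
    ∃ (a : ℕ) (b : ℤ), 1 ≤ a ∧
      1 < (γ : ℝ) ^ a / (δ : ℝ) ^ b ∧ (γ : ℝ) ^ a / (δ : ℝ) ^ b < 1 + ε := by
  have hγ' : (0:ℝ) < γ := by exact_mod_cast hγ
  have hδ1 : (1:ℝ) < δ := by exact_mod_cast hδ
  have hδ' : (0:ℝ) < δ := by linarith
  have hD : 0 < Real.log δ := Real.log_pos hδ1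
  have hE : 0 < Real.log (1 + ε) := Real.log_pos (by linarith)
  have hlog : ∀ (a : ℕ) (b : ℤ), Real.log ((γ : ℝ) ^ a / (δ : ℝ) ^ b)
      = a * Real.log γ - b * Real.log δ := by
    intro a b
    rw [Real.log_div (by positivity) (by positivity), Real.log_pow, Real.log_zpow]
  obtain ⟨θ, hθ⟩ : ∃ θ, θ = Real.log γ / Real.log δ := ⟨_, rfl⟩
  have hL : Real.log γ = θ * Real.log δ := by rw [hθ]; field_simp
  have hirr : ∀ (a : ℕ) (b : ℤ), 1 ≤ a → (a : ℝ) * θ - b ≠ 0 := by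
    intro a b ha h
    have h0 : Real.log ((γ : ℝ) ^ a / (δ : ℝ) ^ b) = 0 := by
      rw [hlog, hL]; linear_combination Real.log δ * h
    have hp : (0:ℝ) < (γ : ℝ) ^ a / (δ : ℝ) ^ b := by positivity
    have h1 := Real.eq_one_of_pos_of_log_eq_zero hp h0
    rw [div_eq_one_iff_eq (by positivity)] at h1
    have h2 : γ ^ a = δ ^ b := by exact_mod_cast h1
    have h3 := hind a b (by
      rw [abs_of_pos hγ, abs_of_pos (by linarith : 0 < δ), zpow_natCast, h2])
    omega
  suffices H : ∃ (a : ℕ) (b : ℤ), 1 ≤ a ∧ 0 < (a : ℝ) * θ - b ∧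
      (a : ℝ) * θ - b < Real.log (1 + ε) / Real.log δ by
    obtain ⟨a, b, ha, h1, h2⟩ := H
    have hp : (0:ℝ) < (γ : ℝ) ^ a / (δ : ℝ) ^ b := by positivity
    have he : Real.log ((γ : ℝ) ^ a / (δ : ℝ) ^ b) = (a * θ - b) * Real.log δ := by
      rw [hlog, hL]; ring
    refine ⟨a, b, ha, ?_, ?_⟩
    · rw [← Real.log_pos_iff hp.le, he]; positivity
    · rw [← Real.log_lt_log_iff hp (by linarith), he]
      exact (lt_div_iff₀ hD).1 h2
  have hη : 0 < Real.log (1 + ε) / Real.log δ := by positivity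
  generalize Real.log (1 + ε) / Real.log δ = η at hη
  obtain ⟨n, hn⟩ := exists_nat_one_div_lt hη
  obtain ⟨j, k, hk0, -, hjk⟩ := Real.exists_int_int_abs_mul_sub_le θ (Nat.succ_pos n)
  lift k to ℕ using hk0.le
  have hk1 : 1 ≤ k := by exact_mod_cast hk0
  have hne := hirr k j hk1
  push_cast at hjk
  have hn0 : (0:ℝ) < (n:ℝ) + 1 := by positivity
  have hlt : |(k:ℝ) * θ - j| < η := by
    refine lt_of_le_of_lt (hjk.trans ?_) hn
    exact one_div_le_one_div_of_le hn0 (by linarith)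
  have hle : |(k:ℝ) * θ - j| ≤ 1 := by
    refine hjk.trans ?_
    rw [div_le_one (by positivity)]; linarith
  rcases lt_or_gt_of_ne hne with h | h
  · rw [abs_of_neg h] at hlt hle
    obtain ⟨x, hx⟩ : ∃ x, x = -((k:ℝ) * θ - j) := ⟨_, rfl⟩
    rw [← hx] at hlt hle
    have hx0 : 0 < x := by linarith
    have hN1 : 1 ≤ ⌊1 / x⌋₊ := by
      rw [Nat.one_le_floor_iff, le_div_iff₀ hx0]; linarith
    have hN2 : (⌊1 / x⌋₊ : ℝ) ≤ 1 / x := Nat.floor_le (by positivity)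
    have hN3 := Nat.lt_floor_add_one (1 / x)
    rw [le_div_iff₀ hx0] at hN2
    rw [div_lt_iff₀ hx0] at hN3
    generalize ⌊1 / x⌋₊ = N at hN1 hN2 hN3
    have hNk : 1 ≤ N * k := Nat.mul_pos hN1 hk1
    have e : ((N * k : ℕ) : ℝ) * θ - ((N * j - 1 : ℤ) : ℝ) = 1 - N * x := by
      rw [hx]; push_cast; ring
    have hne2 := hirr (N * k) (N * j - 1) hNk
    rw [e] at hne2
    refine ⟨N * k, N * j - 1, hNk, ?_, ?_⟩
    · rw [e]; exact lt_of_le_of_ne (by linarith) hne2.symm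
    · rw [e]; linarith
  · exact ⟨k, j, hk1, h, (le_abs_self _).trans_lt hlt⟩
end

section
/- Let γ ∈ ℚ and δ ∈ ℤ be multiplicatively independent, Σ = {γ^a δ^b : a, b ∈ ℕ}, and let 𝒫 = {p_1, …, p_m} be the (finite, possibly empty) set of primes p with |γ|_p > 1. Suppose α ∈ 𝔸/ℚ has irrational real coordinate, and suppose there exists q ∈ ℚ such that the class ι(q) ∈ X_𝒫 of the diagonal embedding of q is an accumulation point of the set π(Σα) ⊆ X_𝒫. Then Σα is dense in 𝔸/ℚ. -/
open IsDedekindDomain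

instance : Nonempty ↥FD :=
  ⟨⟨(0, 0), ⟨le_refl 0, zero_lt_one⟩, fun v => (v.adicCompletionIntegers ℚ).zero_mem⟩⟩

/-- The set of finite places where `|γ|_p > 1`. -/
def Pset (γ : ℚ) : Set (HeightOneSpectrum ℤ) := {v | 1 < v.valuation ℚ γ}

/-- The space `ℝ × ∏_{p ∈ 𝒫} ℚ_p`. -/
noncomputable abbrev XP (γ : ℚ) : Type := ℝ × ∀ v : Pset γ, (v : HeightOneSpectrum ℤ).adicCompletion ℚ

/-- The diagonally embedded copy of `ℤ[1/(p_1⋯p_m)]` (the rationals that are integral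
at every place outside `𝒫`) inside `ℝ × ∏_{p ∈ 𝒫} ℚ_p`. -/
noncomputable def iotaSub (γ : ℚ) : AddSubgroup (XP γ) where
  carrier := {z | ∃ q : ℚ, (∀ v : HeightOneSpectrum ℤ, v ∉ Pset γ → v.valuation ℚ q ≤ 1) ∧
    z = ((q : ℝ), fun v => algebraMap ℚ _ q)}
  zero_mem' := ⟨0, fun v _ => by simp, by simp; rfl⟩
  add_mem' := by
    rintro z w ⟨q, hq, rfl⟩ ⟨q', hq', rfl⟩
    exact ⟨q + q', fun v hv => le_trans (Valuation.map_add _ q q')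
      (max_le (hq v hv) (hq' v hv)), by push_cast; simp [Prod.ext_iff, map_add]; rfl⟩
  neg_mem' := by
    rintro z ⟨q, hq, rfl⟩
    exact ⟨-q, fun v hv => by rw [Valuation.map_neg]; exact hq v hv,
      by push_cast; simp [Prod.ext_iff, map_neg]; rfl⟩

/-- The quotient group `X_𝒫 = (ℝ × ∏_{p ∈ 𝒫} ℚ_p)/ι(ℤ[1/(p_1⋯p_m)])`. -/
noncomputable abbrev XPmod (γ : ℚ) := XP γ ⧸ iotaSub γ

/-- The inverse of the bijection `ℱ → 𝔸/ℚ`: the unique representative in the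
fundamental domain. -/
noncomputable def repF : AModQ → ↥FD := Function.invFun (fun x : ↥FD => phiQ (x : AQ))

/-- The projection `π : 𝔸/ℚ → X_𝒫`, sending `φ(x)` for `x ∈ ℱ` to the class of
`(x_∞, x_{p_1}, …, x_{p_m})`. -/
noncomputable def piP (γ : ℚ) (α : AModQ) : XPmod γ :=
  QuotientAddGroup.mk (((repF α : AQ).1, fun v => (repF α : AQ).2 v) : XP γ)

lemma nhds_int (v : HeightOneSpectrum ℤ) (M : ℤ) (hM : M ≠ 0) :
    {x : v.adicCompletion ℚ | Valued.v x ≤ v.valuation ℚ (M : ℚ)} ∈ nhds 0 := by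
  have hM' : (M : ℚ) ≠ 0 := by exact_mod_cast hM
  have h0 : Valued.v.restrict (algebraMap ℚ (v.adicCompletion ℚ) M) ≠ 0 := by
    have h1 : algebraMap ℚ (v.adicCompletion ℚ) M ≠ 0 := (map_ne_zero _).2 hM'
    intro h
    exact h1 (by simpa only [Valuation.restrict_eq_zero_iff, Valuation.zero_iff] using h)
  have := (Valued.isOpen_closedBall (v.adicCompletion ℚ) h0)
  convert this.mem_nhds (x := 0) (by simp) using 3
  rw [Valuation.restrict_le_iff]
  exact (HeightOneSpectrum.valuedAdicCompletion_eq_valuation' v (M:ℚ)) ▸ Iff.rfl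

lemma exists_prime_gen (v : HeightOneSpectrum ℤ) : ∃ p : ℤ, Prime p ∧ v.asIdeal = Ideal.span {p} := by
  obtain ⟨p, hp⟩ := (IsPrincipalIdealRing.principal v.asIdeal).principal
  refine ⟨p, ?_, hp⟩
  have h0 : p ≠ 0 := by
    rintro rfl
    exact v.ne_bot (by rw [hp]; simp)
  rw [← Ideal.span_singleton_prime h0]
  have := v.isPrime
  rw [hp] at this
  exact this

lemma nhds_exists_int (v : HeightOneSpectrum ℤ) (s : Set (v.adicCompletion ℚ)) (hs : s ∈ nhds 0) :
    ∃ M : ℤ, M ≠ 0 ∧ ∀ x : v.adicCompletion ℚ, Valued.v x ≤ v.valuation ℚ (M : ℚ) → x ∈ s := by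
  rw [Valued.mem_nhds_zero] at hs
  obtain ⟨g, hg⟩ := hs
  obtain ⟨r, hr⟩ := v.valuation_surjective ℚ (MonoidWithZeroHom.ValueGroup₀.embedding g.1)
  have hr0 : r ≠ 0 := by
    rintro rfl
    rw [map_zero] at hr
    exact g.ne_zero (MonoidWithZeroHom.ValueGroup₀.embedding_strictMono.injective (by rw [← hr, map_zero]))
  obtain ⟨p, hp, hvp⟩ := exists_prime_gen v
  have hp1 : v.valuation ℚ (p : ℚ) < 1 := by
    have := (v.valuation_lt_one_iff_mem (K := ℚ) p).2 (by rw [hvp]; exact Ideal.mem_span_singleton_self p)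
    simpa using this
  refine ⟨r.num * p, mul_ne_zero (by simpa using hr0) hp.ne_zero, fun x hx => hg ?_⟩
  show Valued.v.restrict x < g.1
  rw [Valuation.restrict_lt_iff_lt_embedding, ← hr]
  refine hx.trans_lt ?_
  have hn : v.valuation ℚ (r.num : ℚ) ≤ v.valuation ℚ r := by
    have h1 : (r.num : ℚ) = r * r.den := by simp
    rw [h1, map_mul]
    have := v.valuation_le_one (K := ℚ) (r.den : ℤ)
    simp at this
    exact mul_le_of_le_one_right' this
  push_cast
  rw [map_mul]
  have hpos : 0 < v.valuation ℚ r := by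
    rw [Valuation.pos_iff]; exact hr0
  calc _ ≤ v.valuation ℚ r * v.valuation ℚ (p:ℚ) := by gcongr
    _ < v.valuation ℚ r := mul_lt_of_lt_one_right hpos hp1

lemma local_approx (v : HeightOneSpectrum ℤ) (x : v.adicCompletion ℚ) :
    ∃ r : ℚ, Valued.v (x - algebraMap ℚ (v.adicCompletion ℚ) r) ≤ 1 ∧
      ∀ w : HeightOneSpectrum ℤ, w ≠ v → w.valuation ℚ r ≤ 1 := by
  obtain ⟨r, hr⟩ : ∃ r : ℚ, Valued.v (x - algebraMap ℚ (v.adicCompletion ℚ) r) ≤ 1 := by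
    have h := nhds_int v 1 one_ne_zero
    have h2 : {y : v.adicCompletion ℚ | Valued.v (x - y) ≤ 1} ∈ nhds x := by
      have hc : Filter.Tendsto (fun y => x - y) (nhds x) (nhds 0) := by
        have : Continuous (fun y : v.adicCompletion ℚ => x - y) := by fun_prop
        simpa using this.tendsto x
      filter_upwards [hc h] with y hy
      simpa using hy
    obtain ⟨y, hy', hy⟩ := (HeightOneSpectrum.denseRange_algebraMap ℚ v).inter_nhds_nonempty h2
    obtain ⟨r, rfl⟩ := hy'
    exact ⟨r, hy⟩
  obtain ⟨p, hp, hvp⟩ := exists_prime_gen v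
  have hd0 : (r.den : ℤ) ≠ 0 := by exact_mod_cast r.den_nz
  obtain ⟨d', hd', hnd⟩ := (FiniteMultiplicity.of_prime_left hp hd0).exists_eq_pow_mul_and_not_dvd
  set k := multiplicity p (r.den : ℤ)
  have hcop : IsCoprime (p ^ k) d' := (hp.coprime_iff_not_dvd.2 hnd).pow_left
  obtain ⟨a, b, hab⟩ := hcop
  have hd'0 : (d' : ℚ) ≠ 0 := by
    rintro h
    have : d' = 0 := by exact_mod_cast h
    exact hnd (by simp [this])
  have hp0 : (p : ℚ) ≠ 0 := by exact_mod_cast hp.ne_zero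
  have hrr : r = (r.num * a : ℤ) / (d' : ℚ) + (r.num * b : ℤ) / (p : ℚ) ^ k := by
    have h1 : r = r.num / r.den := by simp [Rat.num_div_den]
    have h2 : (r.den : ℚ) = (p : ℚ) ^ k * d' := by exact_mod_cast hd'
    have h3 : (a : ℚ) * p ^ k + b * d' = 1 := by exact_mod_cast hab
    rw [div_add_div _ _ hd'0 (by positivity), eq_div_iff (by positivity)]
    conv_lhs => rw [h1, h2]
    field_simp
    push_cast
    linear_combination (-(r.num : ℚ)) * h3
  have hint : ∀ (w : HeightOneSpectrum ℤ) (n : ℤ), w.valuation ℚ (n : ℚ) ≤ 1 := fun w n => by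
    simpa using w.valuation_le_one (K := ℚ) n
  refine ⟨(r.num * b : ℤ) / (p : ℚ) ^ k, ?_, ?_⟩
  · have hv1 : v.valuation ℚ ((r.num * a : ℤ) / (d' : ℚ)) ≤ 1 := by
      have : v.valuation ℚ (d' : ℚ) = 1 := by
        have := (v.valuation_eq_one_iff_notMem (K := ℚ) (r := d')).2 (by
          rw [hvp, Ideal.mem_span_singleton]; exact hnd)
        simpa using this
      rw [map_div₀, this, div_one]
      exact hint _ _
    have : x - algebraMap ℚ (v.adicCompletion ℚ) ((r.num * b : ℤ) / (p : ℚ) ^ k)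
      = (x - algebraMap ℚ (v.adicCompletion ℚ) r) + algebraMap ℚ (v.adicCompletion ℚ) ((r.num * a : ℤ) / (d' : ℚ)) := by
      have h4 := congrArg (algebraMap ℚ (v.adicCompletion ℚ)) hrr
      rw [map_add] at h4
      rw [h4]; ring
    rw [this]
    refine (Valuation.map_add _ _ _).trans (max_le hr ?_)
    exact (HeightOneSpectrum.valuedAdicCompletion_eq_valuation' v _).trans_le hv1
  · intro w hw
    have : w.valuation ℚ (p : ℚ) = 1 := by
      have := (w.valuation_eq_one_iff_notMem (K := ℚ) (r := p)).2 (by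
        intro hmem
        apply hw
        have hle : v.asIdeal ≤ w.asIdeal := by
          rw [hvp, Ideal.span_singleton_le_iff_mem]; exact hmem
        exact (HeightOneSpectrum.ext (v.isMaximal.eq_of_le w.isPrime.ne_top hle)).symm)
      simpa using this
    rw [map_div₀, map_pow, this, one_pow, div_one]
    exact hint _ _

lemma val_int_le (w : HeightOneSpectrum ℤ) (n : ℤ) : w.valuation ℚ (n : ℚ) ≤ 1 := by
  simpa using w.valuation_le_one (K := ℚ) n

lemma val_alg (v : HeightOneSpectrum ℤ) (q : ℚ) :
    Valued.v (algebraMap ℚ (v.adicCompletion ℚ) q) = v.valuation ℚ q :=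
  HeightOneSpectrum.valuedAdicCompletion_eq_valuation' v q

lemma strong_approx_one (x : FiniteAdeleRing ℤ ℚ) :
    ∃ r : ℚ, ∀ v : HeightOneSpectrum ℤ,
      Valued.v (x v - algebraMap ℚ (v.adicCompletion ℚ) r) ≤ 1 := by
  classical
  have hfin : {v : HeightOneSpectrum ℤ | ¬ Valued.v (x v) ≤ 1}.Finite := by
    have := x.2
    rw [Filter.eventually_cofinite] at this
    exact this
  choose r hr1 hr2 using fun v => local_approx v (x v)
  refine ⟨∑ v ∈ hfin.toFinset, r v, fun v => ?_⟩
  by_cases hv : v ∈ hfin.toFinset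
  · rw [← Finset.add_sum_erase _ _ hv, map_add, ← sub_sub]
    refine (Valuation.map_sub _ _ _).trans (max_le (hr1 v) ?_)
    rw [val_alg]
    refine Valuation.map_sum_le _ fun w hw => hr2 w v (Finset.ne_of_mem_erase hw).symm
  · refine (Valuation.map_sub _ _ _).trans (max_le ?_ ?_)
    · simpa using hv
    · rw [val_alg]
      refine Valuation.map_sum_le _ fun w hw => hr2 w v ?_
      rintro rfl
      exact hv hw

lemma strong_approx (x : FiniteAdeleRing ℤ ℚ) (M : ℤ) (hM : M ≠ 0) :
    ∃ r : ℚ, ∀ v : HeightOneSpectrum ℤ,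
      Valued.v (x v - algebraMap ℚ (v.adicCompletion ℚ) r) ≤ v.valuation ℚ (M : ℚ) := by
  have hM' : (M : ℚ) ≠ 0 := by exact_mod_cast hM
  obtain ⟨r, hr⟩ := strong_approx_one (algebraMap ℚ (FiniteAdeleRing ℤ ℚ) (M : ℚ)⁻¹ * x)
  refine ⟨M * r, fun v => ?_⟩
  have h1 : x v - algebraMap ℚ (v.adicCompletion ℚ) (M * r)
      = algebraMap ℚ (v.adicCompletion ℚ) M *
        ((algebraMap ℚ (FiniteAdeleRing ℤ ℚ) (M : ℚ)⁻¹ * x) v - algebraMap ℚ (v.adicCompletion ℚ) r) := by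
    have h2 : (algebraMap ℚ (FiniteAdeleRing ℤ ℚ) (M : ℚ)⁻¹ * x) v
      = algebraMap ℚ (v.adicCompletion ℚ) (M : ℚ)⁻¹ * x v := rfl
    rw [h2, mul_sub, ← mul_assoc, ← map_mul, mul_inv_cancel₀ hM', map_one, one_mul, ← map_mul]
  rw [h1, map_mul, val_alg]
  exact mul_le_of_le_one_right' (hr v)

lemma phiQ_eq_of (x y : AQ) (r : ℚ) (h : x - y = algebraMap ℚ AQ r) : phiQ x = phiQ y := by
  unfold phiQ
  rw [QuotientAddGroup.eq_iff_sub_mem]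
  exact ⟨r, h.symm⟩

lemma exists_of_phiQ_eq (x y : AQ) (h : phiQ x = phiQ y) : ∃ r : ℚ, x - y = algebraMap ℚ AQ r := by
  unfold phiQ at h
  rw [QuotientAddGroup.eq_iff_sub_mem] at h
  obtain ⟨r, hr⟩ := h
  exact ⟨r, hr.symm⟩

lemma FD_surj : Function.Surjective (fun x : ↥FD => phiQ (x : AQ)) := by
  intro α
  obtain ⟨x, rfl⟩ := QuotientAddGroup.mk_surjective α
  obtain ⟨r, hr⟩ := strong_approx_one x.2
  let s : ℚ := r + (⌊x.1 - r⌋ : ℤ)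
  refine ⟨⟨x - algebraMap ℚ AQ s, ?_, ?_⟩, ?_⟩
  · have : (x - algebraMap ℚ AQ s).1 = Int.fract (x.1 - r) := by
      show x.1 - ((s : ℚ) : ℝ) = _
      rw [Int.fract]; simp only [s]; push_cast; ring
    rw [this]
    exact ⟨Int.fract_nonneg _, Int.fract_lt_one _⟩
  · intro v
    rw [HeightOneSpectrum.mem_adicCompletionIntegers]
    have : (x - algebraMap ℚ AQ s).2 v = (x.2 v - algebraMap ℚ (v.adicCompletion ℚ) r)
        - algebraMap ℚ (v.adicCompletion ℚ) ((⌊x.1 - r⌋ : ℤ) : ℚ) := by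
      rw [sub_sub, ← map_add]; rfl
    rw [this]
    refine (Valuation.map_sub _ _ _).trans (max_le (hr v) ?_)
    rw [val_alg]; exact val_int_le _ _
  · exact phiQ_eq_of _ _ (-s) (by simp)

lemma phiQ_repF (α : AModQ) : phiQ (repF α : AQ) = α :=
  Function.rightInverse_invFun FD_surj α

lemma nhds_adele (U : Set (FiniteAdeleRing ℤ ℚ)) (hU : U ∈ nhds 0) :
    ∃ M : ℤ, M ≠ 0 ∧ ∀ x : FiniteAdeleRing ℤ ℚ,
      (∀ v, Valued.v (x v) ≤ v.valuation ℚ (M : ℚ)) → x ∈ U := by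
  have hopen : ∀ v : HeightOneSpectrum ℤ, IsOpen ((v.adicCompletionIntegers ℚ : Set (v.adicCompletion ℚ))) :=
    fun v => Valued.isOpen_valuationSubring _
  have hn := RestrictedProduct.nhds_eq_map_structureMap hopen
    (fun v : HeightOneSpectrum ℤ => (⟨0, (v.adicCompletionIntegers ℚ).zero_mem⟩ : (v.adicCompletionIntegers ℚ : Set (v.adicCompletion ℚ))))
  have hU2 : (U : Set (RestrictedProduct (fun v : HeightOneSpectrum ℤ => v.adicCompletion ℚ)
      (fun v => (v.adicCompletionIntegers ℚ : Set (v.adicCompletion ℚ))) Filter.cofinite)) ∈ _ :=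
    (hn ▸ hU : _ ∈ Filter.map _ _)
  have hU' := Filter.mem_map.1 hU2
  rw [nhds_pi, Filter.mem_pi] at hU'
  obtain ⟨I, hI, t, ht, hsub⟩ := hU'
  have key : ∀ v : HeightOneSpectrum ℤ, ∃ M : ℤ, M ≠ 0 ∧
      ∀ x : (v.adicCompletionIntegers ℚ : Set (v.adicCompletion ℚ)), Valued.v (x : v.adicCompletion ℚ) ≤ v.valuation ℚ (M : ℚ) → x ∈ t v := by
    intro v
    have h1 := ht v
    rw [mem_nhds_subtype] at h1
    obtain ⟨u, hu, hut⟩ := h1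
    obtain ⟨M, hM, h⟩ := nhds_exists_int v u hu
    exact ⟨M, hM, fun x hx => hut (h _ hx)⟩
  choose N hN0 hN using key
  classical
  refine ⟨∏ v ∈ hI.toFinset, N v, Finset.prod_ne_zero_iff.2 fun v _ => hN0 v, fun x hx => ?_⟩
  have hxi : ∀ v, x v ∈ v.adicCompletionIntegers ℚ := fun v => by
    rw [HeightOneSpectrum.mem_adicCompletionIntegers]
    exact (hx v).trans (val_int_le _ _)
  have := @hsub (fun v => ⟨x v, hxi v⟩) (by
    intro v hv
    apply hN
    refine (hx v).trans ?_
    rw [← Finset.mul_prod_erase _ _ (hI.mem_toFinset.2 hv)]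
    push_cast
    rw [map_mul]
    refine mul_le_of_le_one_right' ?_
    have := val_int_le v (∏ x ∈ hI.toFinset.erase v, N x)
    push_cast at this
    exact this)
  exact this

lemma log_density (θ : ℝ) (hθ : Irrational θ) (η : ℝ) (hη : 0 < η) :
    ∃ (A : ℕ) (X0 : ℝ), ∀ x : ℝ, X0 ≤ x → ∃ a b : ℕ, 1 ≤ a ∧ a ≤ A ∧ 1 ≤ b ∧
      |a * θ + b - x| < η := by
  obtain ⟨N, hN⟩ := exists_nat_gt (1 / η)
  have hNpos : 0 < N := by
    have : (0 : ℝ) < N := lt_trans (by positivity) hN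
    exact_mod_cast this
  obtain ⟨m, n, hn0, -, hmn⟩ := Real.exists_int_int_abs_mul_sub_le θ hNpos
  lift n to ℕ using hn0.le
  set s : ℝ := n * θ - m with hs
  have hs0 : s ≠ 0 := by
    intro h
    have hn' : n ≠ 0 := by omega
    have := (hθ.natCast_mul hn').sub_intCast m
    exact this.ne_zero h
  have hsη : |s| < η := by
    refine lt_of_le_of_lt hmn ?_
    rw [div_lt_iff₀ (by positivity)]
    rw [div_lt_iff₀ hη] at hN
    nlinarith
  have hsp : 0 < |s| := abs_pos.2 hs0
  obtain ⟨J, hJ⟩ := exists_nat_gt (2 / |s| + 1)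
  refine ⟨n * J, J * |(m : ℝ)| + 3, fun x hx => ?_⟩
  obtain ⟨e, he, hpos, hub⟩ : ∃ e : ℤ, (-2 ≤ e ∧ e ≤ 1) ∧ 0 < (Int.fract x + e) / s ∧
      (Int.fract x + e) / s ≤ 2 / |s| := by
    have f0 := Int.fract_nonneg x
    have f1 := Int.fract_lt_one x
    rcases lt_or_gt_of_ne hs0 with h | h
    · refine ⟨-2, by norm_num, ?_, ?_⟩
      · apply div_pos_of_neg_of_neg _ h
        push_cast; linarith
      · rw [abs_of_neg h, ← neg_div_neg_eq]
        have : 0 < -s := by linarith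
        gcongr
        push_cast; linarith
    · refine ⟨1, by norm_num, ?_, ?_⟩
      · apply div_pos _ h
        push_cast; linarith
      · rw [abs_of_pos h]
        gcongr
        push_cast; linarith
  set y := Int.fract x + e with hy
  set j := ⌈y / s⌉₊ with hj
  have hj1 : 1 ≤ j := Nat.ceil_pos.2 hpos
  have hj2 : (j : ℝ) < y / s + 1 := Nat.ceil_lt_add_one hpos.le
  have hj3 : y / s ≤ j := Nat.le_ceil _
  have hjJ : j ≤ J := by
    have : (j : ℝ) < J := by linarith
    exact_mod_cast this.le
  have hbpos : 1 ≤ ⌊x⌋ - e - j * m := by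
    have h1 : (j : ℝ) * m ≤ J * |(m : ℝ)| := by
      calc (j : ℝ) * m ≤ j * |(m:ℝ)| := by gcongr; exact le_abs_self _
        _ ≤ _ := by gcongr
    have h2 : (j : ℝ) * m + 3 ≤ x := by linarith
    have h3 : (j * m + 3 : ℤ) ≤ ⌊x⌋ := by
      rw [Int.le_floor]; push_cast; exact h2
    have := he.2
    linarith
  obtain ⟨b, hb⟩ : ∃ b : ℕ, (b : ℤ) = ⌊x⌋ - e - j * m := ⟨_, Int.toNat_of_nonneg (by linarith)⟩
  refine ⟨n * j, b, ?_, Nat.mul_le_mul_left _ hjJ, by omega, ?_⟩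
  · exact Nat.mul_pos (by omega) hj1
  · have hb' : (b : ℝ) = ⌊x⌋ - e - j * m := by exact_mod_cast hb
    have hx' : x = ⌊x⌋ + Int.fract x := (Int.floor_add_fract x).symm
    have : ((n * j : ℕ) : ℝ) * θ + b - x = (j - y / s) * s := by
      rw [sub_mul, div_mul_cancel₀ _ hs0, hb']
      push_cast
      rw [hy, hs]
      linarith
    rw [this, abs_mul]
    have h1 : |(j : ℝ) - y / s| ≤ 1 := by
      rw [abs_le]; constructor <;> linarith
    nlinarith

lemma hit (g d : ℝ) (hg : 0 < g) (hd : 1 < d) (hirr : Irrational (Real.log g / Real.log d))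
    (L ε : ℝ) (hL : 0 < L) (hε : 0 < ε) :
    ∃ (A : ℕ) (ρ : ℝ), 0 < ρ ∧ ∀ t c : ℝ, t ≠ 0 → |t| < ρ →
      ∃ a b : ℕ, 1 ≤ a ∧ a ≤ A ∧ 1 ≤ b ∧ ∃ m : ℤ, |g ^ a * d ^ b * t - c - L * m| < ε := by
  have hld : 0 < Real.log d := Real.log_pos hd
  set η := min 1 (ε / (8 * L)) with hη
  have hη0 : 0 < η := by positivity
  obtain ⟨A, X0, hA⟩ := log_density _ hirr (η / Real.log d) (by positivity)
  refine ⟨A, L * Real.exp (-(X0 * Real.log d)), by positivity, fun t c ht htρ => ?_⟩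
  obtain ⟨m, hm0, hm1, hm2⟩ : ∃ m : ℤ, 0 < (c + L * m) / t ∧ L ≤ |c + L * m| ∧ |c + L * m| ≤ 2 * L := by
    rcases lt_or_gt_of_ne ht with h | h
    · have h1 := Int.le_ceil ((L + c) / L)
      have h2 := Int.ceil_lt_add_one ((L + c) / L)
      rw [div_le_iff₀ hL] at h1
      rw [← sub_lt_iff_lt_add, lt_div_iff₀ hL] at h2
      refine ⟨-⌈(L + c) / L⌉, ?_, ?_, ?_⟩
      · apply div_pos_of_neg_of_neg _ h; push_cast; nlinarith
      · rw [abs_of_neg (by push_cast; nlinarith)]; push_cast; nlinarith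
      · rw [abs_of_neg (by push_cast; nlinarith)]; push_cast; nlinarith
    · have h1 := Int.le_ceil ((L - c) / L)
      have h2 := Int.ceil_lt_add_one ((L - c) / L)
      rw [div_le_iff₀ hL] at h1
      rw [← sub_lt_iff_lt_add, lt_div_iff₀ hL] at h2
      refine ⟨⌈(L - c) / L⌉, ?_, ?_, ?_⟩
      · apply div_pos _ h; nlinarith
      · rw [abs_of_pos (by nlinarith)]; nlinarith
      · rw [abs_of_pos (by nlinarith)]; nlinarith
  set s := c + L * m with hs
  have htp : 0 < |t| := abs_pos.2 ht
  have hst : Real.exp (X0 * Real.log d) ≤ s / t := by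
    rw [← abs_of_pos hm0, abs_div, le_div_iff₀ htp]
    calc Real.exp (X0 * Real.log d) * |t| ≤ Real.exp (X0 * Real.log d) * (L * Real.exp (-(X0 * Real.log d))) := by gcongr
      _ = L := by rw [Real.exp_neg]; field_simp
      _ ≤ |s| := hm1
  have hX : X0 ≤ Real.log (s / t) / Real.log d := by
    rw [le_div_iff₀ hld, Real.le_log_iff_exp_le hm0]; exact hst
  obtain ⟨a, b, ha1, haA, hb1, hab⟩ := hA _ hX
  refine ⟨a, b, ha1, haA, hb1, m, ?_⟩
  set u := a * Real.log g + b * Real.log d - Real.log (s / t) with hu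
  have hu1 : |u| < η := by
    have : u = (a * (Real.log g / Real.log d) + b - Real.log (s / t) / Real.log d) * Real.log d := by
      rw [hu]; field_simp
    rw [this, abs_mul, abs_of_pos hld, ← lt_div_iff₀ hld]; exact hab
  have hσ : g ^ a * d ^ b * t = s * Real.exp u := by
    have h1 : g ^ a * d ^ b = Real.exp (Real.log (s / t) + u) := by
      rw [hu, add_sub_cancel, Real.exp_add, mul_comm (a:ℝ), mul_comm (b:ℝ), Real.exp_mul, Real.exp_mul, Real.exp_log hg,
        Real.exp_log (by linarith), Real.rpow_natCast, Real.rpow_natCast]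
    rw [h1, Real.exp_add, Real.exp_log hm0]; field_simp
  have h2 : g ^ a * d ^ b * t - c - L * m = s * (Real.exp u - 1) := by
    rw [hσ, hs]; ring
  rw [h2, abs_mul]
  have h3 : |Real.exp u - 1| ≤ 2 * |u| := Real.abs_exp_sub_one_le (hu1.le.trans (min_le_left _ _))
  have h4 : η ≤ ε / (8 * L) := min_le_right _ _
  calc |s| * |Real.exp u - 1| ≤ (2 * L) * (2 * (ε / (8 * L))) := by
        gcongr
        exact h3.trans (by linarith)
    _ = ε / 2 := by field_simp; norm_num
    _ < ε := by linarith

lemma exists_idem_zmod (D : ℕ) [NeZero D] (z : ZMod D) :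
    ∃ k : ℕ, 0 < k ∧ ∀ a : ℕ, 1 ≤ a → z ^ (k * a) = z ^ k := by
  obtain ⟨i, j, hij, h⟩ : ∃ i j : ℕ, i < j ∧ z ^ i = z ^ j := by
    obtain ⟨i, j, hne, h⟩ := Finite.exists_ne_map_eq_of_infinite (fun i : ℕ => z ^ i)
    rcases lt_or_gt_of_ne hne with h' | h'
    · exact ⟨i, j, h', h⟩
    · exact ⟨j, i, h', h.symm⟩
  obtain ⟨p, rfl⟩ := Nat.exists_eq_add_of_lt hij
  have h1 : ∀ c : ℕ, z ^ (i + (p + 1) * c) = z ^ i := by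
    intro c
    induction c with
    | zero => simp
    | succ c ih =>
      rw [show i + (p + 1) * (c + 1) = (i + p + 1) + (p + 1) * c by ring, pow_add, ← h, ← pow_add, ih]
  refine ⟨(p + 1) * (i + 1), by positivity, fun a ha => ?_⟩
  obtain ⟨a, rfl⟩ := Nat.exists_eq_add_of_le' ha
  have : (p + 1) * (i + 1) * (a + 1) = (p * (i + 1) + 1) + (i + (p + 1) * ((i + 1) * a)) := by ring
  rw [this, pow_add, h1, ← pow_add]
  congr 1
  ring

lemma idem_mul {D : ℕ} {z : ZMod D} {k : ℕ} (hk : ∀ a : ℕ, 1 ≤ a → z ^ (k * a) = z ^ k)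
    (l : ℕ) (hl : 0 < l) : ∀ a : ℕ, 1 ≤ a → z ^ (k * l * a) = z ^ (k * l) := by
  intro a ha
  rw [mul_assoc, hk _ (Nat.mul_pos hl ha), hk l hl]

lemma exists_cong (γ : ℚ) (δ D : ℤ) (hD : D ≠ 0) :
    ∃ k : ℕ, 0 < k ∧ Even k ∧ ∀ a b : ℕ, 1 ≤ a → 1 ≤ b → ∀ v : HeightOneSpectrum ℤ,
      v.valuation ℚ γ ≤ 1 →
      v.valuation ℚ (γ ^ (k * a) * (δ : ℚ) ^ (k * b) - γ ^ k * (δ : ℚ) ^ k) ≤ v.valuation ℚ (D : ℚ) := by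
  have : NeZero D.natAbs := ⟨by simpa using hD⟩
  obtain ⟨k1, hk1, h1⟩ := exists_idem_zmod D.natAbs (γ.num : ZMod D.natAbs)
  obtain ⟨k2, hk2, h2⟩ := exists_idem_zmod D.natAbs (γ.den : ZMod D.natAbs)
  obtain ⟨k3, hk3, h3⟩ := exists_idem_zmod D.natAbs (δ : ZMod D.natAbs)
  have H1 := idem_mul h1 (k2 * k3 * 2) (by positivity)
  have H2 := idem_mul h2 (k1 * k3 * 2) (by positivity)
  have H3 := idem_mul h3 (k1 * k2 * 2) (by positivity)
  rw [show k1 * (k2 * k3 * 2) = k1 * k2 * k3 * 2 by ring] at H1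
  rw [show k2 * (k1 * k3 * 2) = k1 * k2 * k3 * 2 by ring] at H2
  rw [show k3 * (k1 * k2 * 2) = k1 * k2 * k3 * 2 by ring] at H3
  set k := k1 * k2 * k3 * 2
  refine ⟨k, by positivity, even_two.mul_left _, fun a b ha hb v hv => ?_⟩
  have hden : v.valuation ℚ (γ.den : ℚ) = 1 := by
    have h := Rat.valuation_le_one_iff_den.1 hv
    have := (v.valuation_eq_one_iff_notMem (K := ℚ)).2 h
    simpa using this
  have hdvd : D ∣ γ.num ^ (k * a) * δ ^ (k * b) * (γ.den : ℤ) ^ k - γ.num ^ k * δ ^ k * (γ.den : ℤ) ^ (k * a) := by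
    rw [← Int.natAbs_dvd, ← ZMod.intCast_zmod_eq_zero_iff_dvd]
    push_cast
    rw [H1 a ha, H2 a ha, H3 b hb, sub_self]
  obtain ⟨e, he⟩ := hdvd
  have hd0 : (γ.den : ℚ) ≠ 0 := by exact_mod_cast γ.den_nz
  have hEq : (γ ^ (k * a) * (δ : ℚ) ^ (k * b) - γ ^ k * (δ : ℚ) ^ k) * ((γ.den : ℚ) ^ (k * a) * (γ.den : ℚ) ^ k)
      = D * e := by
    have he' : (γ.num : ℚ) ^ (k * a) * δ ^ (k * b) * (γ.den : ℚ) ^ k - γ.num ^ k * δ ^ k * (γ.den : ℚ) ^ (k * a) = D * e := by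
      exact_mod_cast he
    rw [← he']
    have hn : (γ.num : ℚ) = γ * γ.den := by simp
    rw [hn, mul_pow, mul_pow]; ring
  have := congrArg (v.valuation ℚ) hEq
  rw [map_mul, map_mul, map_pow, map_pow, hden, one_pow, one_pow, one_mul, mul_one, map_mul] at this
  rw [this]
  exact mul_le_of_le_one_right' (val_int_le v e)

lemma irr_log (γ : ℚ) (δ : ℤ) (hγ : γ ≠ 0) (hδ : δ ≠ 0) (hind : MultIndep γ (δ : ℚ)) (k : ℕ) (hk : 0 < k) :
    1 < |(δ : ℝ)| ^ k ∧ Irrational (Real.log (|(γ : ℝ)| ^ k) / Real.log (|(δ : ℝ)| ^ k)) := by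
  have hd1 : 1 < |(δ : ℝ)| := by
    have h1 : |δ| ≠ 1 := by
      intro h
      have := hind 0 1 (by
        have : |(δ : ℚ)| = 1 := by exact_mod_cast h
        simp [this])
      simp at this
    have h2 : 0 < |δ| := abs_pos.2 hδ
    have : 1 < |δ| := by omega
    exact_mod_cast this
  refine ⟨one_lt_pow₀ hd1 hk.ne', ?_⟩
  have hk' : (k : ℝ) ≠ 0 := by positivity
  rw [Real.log_pow, Real.log_pow, mul_div_mul_left _ _ hk']
  have hld : 0 < Real.log |(δ : ℝ)| := Real.log_pos hd1
  have hg0 : 0 < |(γ : ℝ)| := abs_pos.2 (by exact_mod_cast hγ)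
  rintro ⟨r, hr⟩
  have hrd : (r.den : ℝ) ≠ 0 := by exact_mod_cast r.den_nz
  have h1 : (r.den : ℝ) * Real.log |(γ : ℝ)| = r.num * Real.log |(δ : ℝ)| := by
    rw [eq_div_iff hld.ne'] at hr
    rw [← hr, ← mul_assoc]
    congr 1
    have : (r.den : ℚ) * r = r.num := by simp [mul_comm]
    exact_mod_cast this
  have h2 : |(γ : ℝ)| ^ (r.den : ℤ) = |(δ : ℝ)| ^ r.num := by
    apply Real.log_injOn_pos (Set.mem_Ioi.2 (by positivity)) (Set.mem_Ioi.2 (zpow_pos (by linarith) _))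
    rw [Real.log_zpow, Real.log_zpow]
    exact_mod_cast h1
  have := hind r.den r.num (Rat.cast_injective (α := ℝ) (by push_cast; exact h2))
  exact r.den_nz (by exact_mod_cast this.1)

lemma acc_extract (γ : ℚ) (S : Set AModQ) (q : ℚ)
    (hacc : AccPt
      (QuotientAddGroup.mk (((q : ℝ), fun v => algebraMap ℚ _ q) : XP γ) : XPmod γ)
      (Filter.principal (piP γ '' S))) (ρ : ℝ) (hρ : 0 < ρ) (N : ℤ) (hN : N ≠ 0) :
    ∃ β ∈ S, ∃ r : ℚ, (∀ v : HeightOneSpectrum ℤ, v ∉ Pset γ → v.valuation ℚ r ≤ 1) ∧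
      |(repF β : AQ).1 - q - r| < ρ ∧ ∀ v ∈ Pset γ,
        Valued.v ((repF β : AQ).2 v - algebraMap ℚ (v.adicCompletion ℚ) q
          - algebraMap ℚ (v.adicCompletion ℚ) r) ≤ v.valuation ℚ (N : ℚ) := by
  have hfinP : Finite (Pset γ) := (HeightOneSpectrum.Support.finite ℤ γ).to_subtype
  have hcl : (QuotientAddGroup.mk (((q : ℝ), fun v => algebraMap ℚ _ q) : XP γ) : XPmod γ) ∈
      closure (piP γ '' S) := mem_closure_iff_clusterPt.2 hacc.clusterPt
  let z0 : XP γ := ((q : ℝ), fun v => algebraMap ℚ _ q)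
  let T : Set (XP γ) := {z | |z.1 - q| < ρ ∧ ∀ v : Pset γ,
    Valued.v (z.2 v - algebraMap ℚ ((v : HeightOneSpectrum ℤ).adicCompletion ℚ) q) ≤
      (v : HeightOneSpectrum ℤ).valuation ℚ (N : ℚ)}
  have hT : T ∈ nhds z0 := by
    have h1 : ∀ᶠ z : XP γ in nhds z0, |z.1 - q| < ρ := by
      have hc : Continuous (fun z : XP γ => |z.1 - q|) := by fun_prop
      apply hc.continuousAt.eventually_lt continuousAt_const
      simpa [z0] using hρ
    have h2 : ∀ᶠ z : XP γ in nhds z0, ∀ v : Pset γ,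
        Valued.v (z.2 v - algebraMap ℚ ((v : HeightOneSpectrum ℤ).adicCompletion ℚ) q) ≤
      (v : HeightOneSpectrum ℤ).valuation ℚ (N : ℚ) := by
      rw [Filter.eventually_all]
      intro v
      have hc : Continuous (fun z : XP γ => z.2 v - algebraMap ℚ ((v : HeightOneSpectrum ℤ).adicCompletion ℚ) q) := by
        fun_prop
      have h3 := hc.tendsto z0
      have h4 : z0.2 v - algebraMap ℚ ((v : HeightOneSpectrum ℤ).adicCompletion ℚ) q = 0 := sub_self _
      rw [h4] at h3
      exact h3 (nhds_int v N hN)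
    exact h1.and h2
  have hT' : (QuotientAddGroup.mk : XP γ → XPmod γ) '' T ∈ nhds (QuotientAddGroup.mk z0 : XPmod γ) :=
    (QuotientAddGroup.isOpenMap_coe (N := iotaSub γ)).image_mem_nhds hT
  obtain ⟨_, ⟨z, hz, hzeq⟩, ⟨β, hβ, rfl⟩⟩ := mem_closure_iff_nhds.1 hcl _ hT'
  unfold piP at hzeq
  have hmem := (QuotientAddGroup.eq_iff_sub_mem).1 hzeq.symm
  obtain ⟨r, hr, hreq⟩ := hmem
  refine ⟨β, hβ, r, hr, ?_, ?_⟩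
  · have h1 : (repF β : AQ).1 - z.1 = r := congrArg Prod.fst hreq
    rw [show (repF β : AQ).1 - q - r = z.1 - q by linarith]
    exact hz.1
  · intro v hv
    have h1 : (repF β : AQ).2 v - z.2 ⟨v, hv⟩ = algebraMap ℚ (v.adicCompletion ℚ) r :=
      congrFun (congrArg Prod.snd hreq) ⟨v, hv⟩
    have h2 := hz.2 ⟨v, hv⟩
    rw [← h1]
    rw [show (repF β : AQ).2 v - algebraMap ℚ (v.adicCompletion ℚ) q - ((repF β : AQ).2 v - z.2 ⟨v, hv⟩)
      = z.2 ⟨v, hv⟩ - algebraMap ℚ (v.adicCompletion ℚ) q by ring]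
    exact h2

lemma mulAct_phiQ (σ : ℚ) (x : AQ) : mulAct σ (phiQ x) = phiQ (algebraMap ℚ AQ σ * x) := rfl

lemma nhds_AModQ (y : AQ) (O : Set AModQ) (hO : O ∈ nhds (phiQ y)) :
    ∃ ε : ℝ, 0 < ε ∧ ∃ M : ℤ, M ≠ 0 ∧ ∀ z : AQ, |z.1 - y.1| < ε →
      (∀ v, Valued.v (z.2 v - y.2 v) ≤ v.valuation ℚ (M : ℚ)) → phiQ z ∈ O := by
  have hcont : Continuous (fun z : AQ => phiQ (z + y)) :=
    (QuotientAddGroup.continuous_mk (N := principalQ)).comp (continuous_id.add continuous_const)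
  have h1 : (fun z : AQ => phiQ (z + y)) ⁻¹' O ∈ nhds (0 : AQ) := by
    apply hcont.continuousAt.preimage_mem_nhds
    simpa using hO
  have h2 : (0 : AQ) = ((0 : ℝ), (0 : FiniteAdeleRing ℤ ℚ)) := rfl
  rw [h2, mem_nhds_prod_iff] at h1
  obtain ⟨u, hu, w, hw, huw⟩ := h1
  obtain ⟨ε, hε, hεu⟩ := Metric.mem_nhds_iff.1 hu
  obtain ⟨M, hM, hMw⟩ := nhds_adele w hw
  refine ⟨ε, hε, M, hM, fun z hz1 hz2 => ?_⟩
  have h3 : (z - y) ∈ (fun z : AQ => phiQ (z + y)) ⁻¹' O := by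
    apply huw
    refine ⟨hεu ?_, hMw _ hz2⟩
    simpa [Real.dist_eq] using hz1
  simpa using h3


/-- If `γ ∈ ℚ` and `δ ∈ ℤ` are multiplicatively independent, `α ∈ 𝔸/ℚ` has irrational
real coordinate, and some `ι(q)` with `q ∈ ℚ` is an accumulation point of `π(Σα) ⊆ X_𝒫`,
then `Σα` is dense in `𝔸/ℚ`. -/
theorem dense_of_rational_accumulation_point (γ : ℚ) (δ : ℤ) (hγ : γ ≠ 0) (hδ : δ ≠ 0)
    (hind : MultIndep γ (δ : ℚ)) (x : AQ) (hx : Irrational x.1) (q : ℚ)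
    (hacc : AccPt
      (QuotientAddGroup.mk (((q : ℝ), fun v => algebraMap ℚ _ q) : XP γ) : XPmod γ)
      (Filter.principal
        (piP γ '' {β : AModQ | ∃ a b : ℕ, β = mulAct (γ ^ a * (δ : ℚ) ^ b) (phiQ x)}))) :
    Dense {β : AModQ | ∃ a b : ℕ, β = mulAct (γ ^ a * (δ : ℚ) ^ b) (phiQ x)} := by

  intro α
  obtain ⟨y, rfl⟩ := QuotientAddGroup.mk_surjective α
  change phiQ y ∈ _
  rw [mem_closure_iff_nhds]
  intro O hO
  obtain ⟨ε, hε, M, hM, hOM⟩ := nhds_AModQ y O hO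
  have hn0 : (q.den : ℤ) ≠ 0 := by exact_mod_cast q.den_nz
  obtain ⟨k, hk, hkeven, hcong⟩ := exists_cong γ δ (M * q.den) (mul_ne_zero hM hn0)
  obtain ⟨hd1, hirr⟩ := irr_log γ δ hγ hδ hind k hk
  have hγR : (γ : ℝ) ≠ 0 := by exact_mod_cast hγ
  obtain ⟨A, ρ, hρ, hhit⟩ := hit (|(γ : ℝ)| ^ k) (|(δ : ℝ)| ^ k) (by positivity) hd1 hirr
    |(M : ℝ)| ε (abs_pos.2 (by exact_mod_cast hM)) hε
  rw [hkeven.pow_abs, hkeven.pow_abs] at hhit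
  have hgd0 : (γ.den : ℤ) ≠ 0 := by exact_mod_cast γ.den_nz
  obtain ⟨β, ⟨a0, b0, hβ⟩, r0, hr0, hreal, hfin⟩ := acc_extract γ _ q hacc ρ hρ
    (M * (γ.den : ℤ) ^ (k * A)) (mul_ne_zero hM (pow_ne_zero _ hgd0))
  set X : AQ := (repF β : AQ) with hX
  have hXβ : phiQ X = β := phiQ_repF β
  set T : AQ := X - algebraMap ℚ AQ (q + r0) with hT
  have hTβ : phiQ T = β := by
    rw [← hXβ]; exact phiQ_eq_of _ _ (-(q + r0)) (by simp [hT])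
  have hT1 : T.1 = X.1 - q - r0 := by
    show X.1 - ((q + r0 : ℚ) : ℝ) = _
    push_cast; ring
  have hT2 : ∀ v, T.2 v = X.2 v - algebraMap ℚ (v.adicCompletion ℚ) q
      - algebraMap ℚ (v.adicCompletion ℚ) r0 := by
    intro v
    rw [sub_sub, ← map_add]; rfl
  -- the real coordinate of `T` is irrational
  have hTne : T.1 ≠ 0 := by
    rw [mulAct_phiQ] at hβ
    obtain ⟨r', hr'⟩ := exists_of_phiQ_eq _ _ (hTβ.trans hβ)
    have h1 : T.1 - ((γ ^ a0 * (δ : ℚ) ^ b0 : ℚ) : ℝ) * x.1 = (r' : ℝ) := congrArg Prod.fst hr'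
    have hσ0 : γ ^ a0 * (δ : ℚ) ^ b0 ≠ 0 :=
      mul_ne_zero (pow_ne_zero _ hγ) (pow_ne_zero _ (by exact_mod_cast hδ))
    have h2 : Irrational T.1 := by
      have := (hx.ratCast_mul hσ0).add_ratCast r'
      rwa [← h1, add_sub_cancel] at this
    exact h2.ne_zero
  have hTρ : |T.1| < ρ := by rw [hT1]; exact hreal
  set σ1 : ℚ := γ ^ k * (δ : ℚ) ^ k with hσ1
  obtain ⟨r1, hr1⟩ := strong_approx (algebraMap ℚ (FiniteAdeleRing ℤ ℚ) σ1 * T.2) M hM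
  obtain ⟨ry, hry⟩ := strong_approx y.2 M hM
  obtain ⟨a, b, ha1, haA, hb1, m, hm⟩ := hhit T.1 (y.1 + r1 - ry) hTne hTρ
  set σ : ℚ := γ ^ (k * a) * (δ : ℚ) ^ (k * b) with hσ
  set s : ℚ := r1 + ((|M| * m : ℤ) : ℚ) - ry with hs
  -- the key estimate at finite places
  have hkey : ∀ v : HeightOneSpectrum ℤ,
      Valued.v (algebraMap ℚ (v.adicCompletion ℚ) σ * T.2 v - algebraMap ℚ (v.adicCompletion ℚ) σ1 * T.2 v)
        ≤ v.valuation ℚ (M : ℚ) := by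
    intro v
    by_cases hv : v ∈ Pset γ
    · have hv' : 1 ≤ v.valuation ℚ γ := (show 1 < v.valuation ℚ γ from hv).le
      have hTv : Valued.v (T.2 v) ≤ v.valuation ℚ ((M * (γ.den : ℤ) ^ (k * A) : ℤ) : ℚ) := by
        rw [hT2]; exact hfin v hv
      have hgen : ∀ i j : ℕ, i ≤ k * A →
          Valued.v (algebraMap ℚ (v.adicCompletion ℚ) (γ ^ i * (δ : ℚ) ^ j) * T.2 v) ≤ v.valuation ℚ (M : ℚ) := by
        intro i j hi
        rw [map_mul, val_alg]
        have hγd : γ * γ.den = γ.num := by simp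
        have h1 : v.valuation ℚ (γ ^ i * (δ : ℚ) ^ j) ≤ v.valuation ℚ (γ ^ (k * A)) := by
          rw [map_mul, map_pow, map_pow, map_pow]
          calc _ ≤ (v.valuation ℚ γ) ^ i * 1 := by
                gcongr
                exact pow_le_one' (val_int_le v δ) j
            _ ≤ _ := by
                rw [mul_one]
                exact pow_le_pow_right' hv' hi
        calc _ ≤ v.valuation ℚ (γ ^ (k * A)) * v.valuation ℚ ((M * (γ.den : ℤ) ^ (k * A) : ℤ) : ℚ) := by
              gcongr
          _ = v.valuation ℚ (M : ℚ) * v.valuation ℚ ((γ.num ^ (k * A) : ℤ) : ℚ) := by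
              rw [← map_mul, ← map_mul]
              congr 1
              push_cast
              rw [← hγd, mul_pow]; ring
          _ ≤ _ := mul_le_of_le_one_right' (val_int_le _ _)
      refine (Valuation.map_sub _ _ _).trans (max_le (hgen _ _ ?_) (hgen _ _ ?_))
      · exact Nat.mul_le_mul_left _ haA
      · exact Nat.le_mul_of_pos_right _ (by omega)
    · have hv' : v.valuation ℚ γ ≤ 1 := not_lt.1 hv
      rw [← sub_mul, ← map_sub, map_mul, val_alg]
      have hnT : v.valuation ℚ (q.den : ℚ) * Valued.v (T.2 v) ≤ 1 := by
        have hXv : Valued.v (X.2 v) ≤ 1 :=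
          (HeightOneSpectrum.mem_adicCompletionIntegers ℤ ℚ v).1 ((repF β).2.2 v)
        have hden : v.valuation ℚ (q.den : ℚ) ≤ 1 := val_int_le v q.den
        rw [← val_alg, ← map_mul, hT2, mul_sub, mul_sub]
        refine (Valuation.map_sub _ _ _).trans (max_le ((Valuation.map_sub _ _ _).trans (max_le ?_ ?_)) ?_)
        · rw [map_mul, val_alg]; exact mul_le_one' hden hXv
        · rw [← map_mul, val_alg]
          have : (q.den : ℚ) * q = (q.num : ℤ) := by simp [mul_comm]
          rw [this]; exact val_int_le _ _
        · rw [map_mul, val_alg, val_alg]; exact mul_le_one' hden (hr0 v hv)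
      calc _ ≤ v.valuation ℚ ((M * q.den : ℤ) : ℚ) * Valued.v (T.2 v) := by
            gcongr
            exact hcong a b ha1 hb1 v hv'
        _ = v.valuation ℚ (M : ℚ) * (v.valuation ℚ (q.den : ℚ) * Valued.v (T.2 v)) := by
            push_cast
            rw [map_mul, mul_assoc]
        _ ≤ _ := mul_le_of_le_one_right' hnT
  refine ⟨phiQ (algebraMap ℚ AQ σ * T - algebraMap ℚ AQ s), hOM _ ?_ ?_, k * a + a0, k * b + b0, ?_⟩
  · have h1 : (algebraMap ℚ AQ σ * T - algebraMap ℚ AQ s).1 = (σ : ℝ) * T.1 - (s : ℝ) := rfl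
    rw [h1]
    convert hm using 2
    rw [hσ, hs]
    push_cast
    rw [pow_mul, pow_mul]
    ring
  · intro v
    have h1 : (algebraMap ℚ AQ σ * T - algebraMap ℚ AQ s).2 v - y.2 v
        = (algebraMap ℚ (v.adicCompletion ℚ) σ * T.2 v - algebraMap ℚ (v.adicCompletion ℚ) σ1 * T.2 v)
          + ((algebraMap ℚ (FiniteAdeleRing ℤ ℚ) σ1 * T.2) v - algebraMap ℚ (v.adicCompletion ℚ) r1)
          - algebraMap ℚ (v.adicCompletion ℚ) ((|M| * m : ℤ) : ℚ)
          - (y.2 v - algebraMap ℚ (v.adicCompletion ℚ) ry) := by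
      have h2 : (algebraMap ℚ AQ σ * T - algebraMap ℚ AQ s).2 v
        = algebraMap ℚ (v.adicCompletion ℚ) σ * T.2 v - algebraMap ℚ (v.adicCompletion ℚ) s := rfl
      have h3 : (algebraMap ℚ (FiniteAdeleRing ℤ ℚ) σ1 * T.2) v
        = algebraMap ℚ (v.adicCompletion ℚ) σ1 * T.2 v := rfl
      rw [h2, h3, hs, map_sub, map_add]
      ring
    rw [h1]
    refine (Valuation.map_sub _ _ _).trans (max_le ((Valuation.map_sub _ _ _).trans (max_le
      ((Valuation.map_add _ _ _).trans (max_le (hkey v) (hr1 v))) ?_)) (hry v))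
    rw [val_alg]
    obtain ⟨e, he⟩ : M ∣ |M| * m := Dvd.dvd.mul_right ((dvd_abs _ _).2 dvd_rfl) _
    rw [he]
    push_cast
    rw [map_mul]
    exact mul_le_of_le_one_right' (val_int_le _ _)
  · have h1 : phiQ (algebraMap ℚ AQ σ * T - algebraMap ℚ AQ s) = mulAct σ β := by
      rw [← hTβ, mulAct_phiQ]
      exact phiQ_eq_of _ _ (-s) (by simp)
    rw [h1, hβ, mulAct_phiQ, mulAct_phiQ, mulAct_phiQ, ← mul_assoc, ← map_mul]
    congr 3
    rw [hσ, pow_add, pow_add]; ring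
end
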